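/- Let 1 ≤ d ≤ m, let λ_1,…,λ_m be pairwise distinct complex numbers, let Q ∈ ℂ[z_1,…,z_d] be a homogeneous polynomial, and let f(z_1,…,z_d) = ∏_{1≤i<j≤d}(z_j − z_i) · Q(z_1,…,z_d) / ∏_{i=1}^d ∏_{j=1}^m (λ_j − z_i). Then the iterated residue of f is independent of the order of the variables: there exists C ≥ 1 such that for every permutation π of {1,…,d} and every tuple (R_1,…,R_d) of positive reals with C < R_{π(1)} and C·R_{π(j)} < R_{π(j+1)} for 1 ≤ j ≤ d−1, the iterated contour integral of f over (R_1,…,R_d) takes one and the same value, independent of π and of the tuple. -/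

import Mathlib

/-!
The numerator of the integrand is a polynomial, and its denominator is a product of polynomials
each in a single variable. Expanding the numerator into monomials therefore writes the integrand
as a finite sum of products `∏ i, g (z i)` of one-variable functions
`g z = z ^ k / ∏ j, (λ_j - z)`, and the iterated integral of such a sum is the corresponding sum
of products of one-variable contour integrals (`iteratedCircleIntegral_sum_prod`). With
`C = 1 + ∑ j, ‖λ_j‖` every pole lies in the disc of radius `C`, while admissibility forces
every radius to exceed `C`, whatever the permutation (`CAdmissible.lt`). By Cauchy's theorem on
annuli each one-variable integral does not depend on the radius (`circleIntegral_monomial_eq`).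
-/

open scoped BigOperators

/-- The iterated contour integral `(1/(2πi))^d ∮_{|z_1|=R_1} ⋯ ∮_{|z_d|=R_d} f dz_d ⋯ dz_1`,
where the outermost integral is in the first variable and each circle (centered at the
origin) is traversed counterclockwise. -/
noncomputable def iteratedCircleIntegral :
    (d : ℕ) → ((Fin d → ℂ) → ℂ) → (Fin d → ℝ) → ℂ
  | 0, f, _ => f Fin.elim0
  | d + 1, f, R =>
      (2 * Real.pi * Complex.I)⁻¹ *
        (∮ z in C(0, R 0),
          iteratedCircleIntegral d (fun w => f (Fin.cons z w)) (fun i => R i.succ))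

/-- `R = (R_1, …, R_d)` is a `C`-admissible radius tuple: all radii are positive,
`C < R_1`, and `C · R_j < R_{j+1}` for `1 ≤ j ≤ d − 1`. -/
def CAdmissible (d : ℕ) (C : ℝ) (R : Fin d → ℝ) : Prop :=
  (∀ i, 0 < R i) ∧ (∀ i : Fin d, (i : ℕ) = 0 → C < R i) ∧
    ∀ i j : Fin d, (j : ℕ) = (i : ℕ) + 1 → C * R i < R j

/-- The iterated integral factors on finite sums of products of one-variable functions. -/
theorem iteratedCircleIntegral_sum_prod {ι : Type*} (S : Finset ι) :
    ∀ (d : ℕ) (c : ι → ℂ) (g : ι → Fin d → ℂ → ℂ) (R : Fin d → ℝ),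
      (∀ s i, CircleIntegrable (g s i) 0 (R i)) →
      iteratedCircleIntegral d (fun z => ∑ s ∈ S, c s * ∏ i, g s i (z i)) R =
        ∑ s ∈ S, c s * ∏ i, ((2 * Real.pi * Complex.I)⁻¹ * ∮ z in C(0, R i), g s i z) := by
  intro d
  induction d with
  | zero => intro c g R _; simp [iteratedCircleIntegral]
  | succ d ih =>
    intro c g R h
    have key : ∀ z : ℂ, iteratedCircleIntegral d
        (fun w => ∑ s ∈ S, c s * ∏ i, g s i (Fin.cons (α := fun _ => ℂ) z w i))
        (fun i => R i.succ) =
        ∑ s ∈ S, (c s * ∏ i : Fin d, ((2 * Real.pi * Complex.I)⁻¹ *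
          ∮ z in C(0, R i.succ), g s i.succ z)) * g s 0 z := by
      intro z
      have := ih (fun s => c s * g s 0 z) (fun s i => g s i.succ) (fun i => R i.succ)
        (fun s i => h s i.succ)
      simp only [Fin.prod_univ_succ, Fin.cons_zero, Fin.cons_succ, ← mul_assoc] at this ⊢
      rw [this]
      exact Finset.sum_congr rfl fun s _ => by ring
    simp only [iteratedCircleIntegral, key]
    rw [circleIntegral.integral_fun_sum, Finset.mul_sum]
    · refine Finset.sum_congr rfl fun s _ => ?_
      rw [circleIntegral.integral_const_mul, Fin.prod_univ_succ]
      ring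
    · intro s _
      exact (h s 0).const_fun_smul (a := c s * ∏ i : Fin d, ((2 * Real.pi * Complex.I)⁻¹ *
          ∮ z in C(0, R i.succ), g s i.succ z))

theorem CAdmissible.lt {d : ℕ} {C : ℝ} {R : Fin d → ℝ} (hC : 1 ≤ C) (h : CAdmissible d C R)
    (i : Fin d) : C < R i := by
  obtain ⟨k, hk⟩ := i
  induction k with
  | zero => exact h.2.1 _ rfl
  | succ k ih =>
    have h1 := ih (by omega)
    have h2 := h.2.2 ⟨k, by omega⟩ ⟨k + 1, hk⟩ rfl
    nlinarith

theorem differentiableAt_monomial {m : ℕ} (lam : Fin m → ℂ) (k : ℕ) {C : ℝ}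
    (hC : ∀ j, ‖lam j‖ < C) {z : ℂ} (hz : C ≤ ‖z‖) :
    DifferentiableAt ℂ (fun z => z ^ k / ∏ j, (lam j - z)) z := by
  refine DifferentiableAt.div (by fun_prop) (by fun_prop) ?_
  refine Finset.prod_ne_zero_iff.2 fun j _ h => ?_
  rw [← sub_eq_zero.1 h] at hz
  exact absurd (hC j) (not_lt.2 hz)

theorem circleIntegral_monomial_eq {m : ℕ} (lam : Fin m → ℂ) (k : ℕ) {C : ℝ} (hC0 : 0 < C)
    (hC : ∀ j, ‖lam j‖ < C) {R : ℝ} (hR : C < R) :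
    (∮ z in C(0, R), z ^ k / ∏ j, (lam j - z)) =
      ∮ z in C(0, C), z ^ k / ∏ j, (lam j - z) := by
  refine Complex.circleIntegral_eq_of_differentiable_on_annulus_off_countable hC0 hR.le
    Set.countable_empty ?_ ?_
  · intro z hz
    refine (differentiableAt_monomial lam k hC ?_).continuousAt.continuousWithinAt
    simpa using hz.2
  · intro z hz
    refine differentiableAt_monomial lam k hC ?_
    have := hz.1.2
    simp only [Metric.mem_closedBall, dist_zero_right, not_le] at this
    exact this.le

/-- **Order-independence of the iterated residue for the localisation integrand.**
For `1 ≤ d ≤ m`, pairwise distinct `λ_1, …, λ_m` and a homogeneous polynomial `Q`, the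
iterated contour integral of
`f(z) = ∏_{i<j}(z_j−z_i) · Q(z) / ∏_{i=1}^d ∏_{j=1}^m (λ_j − z_i)`
takes one and the same value over every radius tuple `(R_1,…,R_d)` of positive reals
satisfying, for some permutation `π` of `{1,…,d}`, `C < R_{π(1)}` and
`C·R_{π(j)} < R_{π(j+1)}` for `1 ≤ j ≤ d−1` (for a suitable `C ≥ 1`): the value is
independent of `π` and of the tuple. -/
theorem iteratedResidue_order_independent
    (d m : ℕ) (hd : 1 ≤ d) (hdm : d ≤ m)
    (lam : Fin m → ℂ) (hlam : Function.Injective lam)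
    (Q : MvPolynomial (Fin d) ℂ) (n : ℕ) (hQ : Q.IsHomogeneous n) :
    ∃ C : ℝ, 1 ≤ C ∧ ∃ v : ℂ,
      ∀ π : Equiv.Perm (Fin d), ∀ R : Fin d → ℝ,
        CAdmissible d C (fun i => R (π i)) →
          iteratedCircleIntegral d
            (fun z =>
              ((∏ i : Fin d, ∏ j ∈ Finset.univ.filter (fun j => i < j), (z j - z i)) *
                MvPolynomial.eval z Q) /
              ∏ i : Fin d, ∏ j : Fin m, (lam j - z i)) R = v := by
  have hC : ∀ j, ‖lam j‖ < 1 + ∑ j, ‖lam j‖ := fun j => by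
    have := Finset.single_le_sum (f := fun j => ‖lam j‖) (fun j _ => norm_nonneg _)
      (Finset.mem_univ j)
    linarith
  have hC1 : 1 ≤ 1 + ∑ j, ‖lam j‖ := by
    have := Finset.sum_nonneg (s := Finset.univ) (f := fun j => ‖lam j‖)
      (fun j _ => norm_nonneg _)
    linarith
  set C := 1 + ∑ j, ‖lam j‖
  let P : MvPolynomial (Fin d) ℂ :=
    (∏ i : Fin d, ∏ j ∈ Finset.univ.filter (fun j => i < j),
      (MvPolynomial.X j - MvPolynomial.X i)) * Q
  refine ⟨C, hC1, ∑ s ∈ P.support, P.coeff s * ∏ i, ((2 * Real.pi * Complex.I)⁻¹ *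
    ∮ z in C(0, C), z ^ s i / ∏ j, (lam j - z)), fun π R hR => ?_⟩
  have hR' : ∀ i, C < R i := fun i => by simpa using hR.lt hC1 (π.symm i)
  have hf : (fun z : Fin d → ℂ =>
      ((∏ i : Fin d, ∏ j ∈ Finset.univ.filter (fun j => i < j), (z j - z i)) *
        MvPolynomial.eval z Q) / ∏ i : Fin d, ∏ j : Fin m, (lam j - z i)) =
      fun z => ∑ s ∈ P.support, P.coeff s * ∏ i, (z i ^ s i / ∏ j, (lam j - z i)) := by
    funext z
    have hP : (∏ i : Fin d, ∏ j ∈ Finset.univ.filter (fun j => i < j), (z j - z i)) *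
        MvPolynomial.eval z Q = MvPolynomial.eval z P := by
      simp [P]
    rw [hP, MvPolynomial.eval_eq', Finset.sum_div]
    exact Finset.sum_congr rfl fun s _ => by rw [Finset.prod_div_distrib, mul_div_assoc]
  rw [hf, iteratedCircleIntegral_sum_prod P.support d (fun s => P.coeff s)
    (fun s i z => z ^ s i / ∏ j, (lam j - z)) R]
  · refine Finset.sum_congr rfl fun s _ => ?_
    congr 1
    refine Finset.prod_congr rfl fun i _ => ?_
    rw [circleIntegral_monomial_eq lam (s i) (by linarith) hC (hR' i)]
  · intro s i
    refine ContinuousOn.circleIntegrable (by linarith [hR' i]) fun z hz => ?_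
    refine (differentiableAt_monomial lam (s i) hC ?_).continuousAt.continuousWithinAt
    rw [mem_sphere_zero_iff_norm] at hz
    rw [hz]
    exact (hR' i).le
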